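/- Let F be a Ferrers diagram of semiperimeter n+1. For any two minimal recurrent configurations c, c' ∈ Rec_min(G(F)), we have CanonTop(c) = CanonTop(c') if and only if c = c'. -/

import Mathlib

open Classical

/-- A Ferrers diagram of semiperimeter `n + 1`, encoded by the set of its row labels
(labels `0, …, n` run along the south-east border; `0` labels the top row and the
last label `n` is a column label). -/
structure Ferrers (n : ℕ) where
  rows : Finset (Fin (n + 1))
  zero_mem : 0 ∈ rows
  last_not_mem : Fin.last n ∉ rows

namespace Ferrers

/-- `(i, j)` is a cell of the diagram: `i` is a row label, `j` a column label, `i < j`. -/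
def Cell {n : ℕ} (F : Ferrers n) (i j : Fin (n + 1)) : Prop :=
  i ∈ F.rows ∧ j ∉ F.rows ∧ i < j

/-- Adjacency in the Ferrers graph `G(F)`. -/
def Adj {n : ℕ} (F : Ferrers n) (u v : Fin (n + 1)) : Prop :=
  F.Cell u v ∨ F.Cell v u

/-- Degree of a vertex in `G(F)`. -/
noncomputable def deg {n : ℕ} (F : Ferrers n) (v : Fin (n + 1)) : ℕ :=
  {u | F.Adj v u}.ncard

/-- Toppling a single vertex.  The height at the sink `0` is kept equal to `c 0`
(grains sent to the sink vanish); toppling the sink sends one grain to each of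
its neighbours. -/
noncomputable def topple {n : ℕ} (F : Ferrers n) (c : Fin (n + 1) → ℕ)
    (v : Fin (n + 1)) : Fin (n + 1) → ℕ :=
  fun u =>
    if u = 0 then c 0
    else if u = v then c v - F.deg v
    else if F.Adj v u then c u + 1
    else c u

/-- Toppling the vertices of a list in order. -/
noncomputable def toppleList {n : ℕ} (F : Ferrers n) (c : Fin (n + 1) → ℕ)
    (l : List (Fin (n + 1))) : Fin (n + 1) → ℕ :=
  l.foldl F.topple c

/-- Simultaneous toppling of a set of vertices. -/
noncomputable def toppleSet {n : ℕ} (F : Ferrers n) (c : Fin (n + 1) → ℕ)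
    (S : Set (Fin (n + 1))) : Fin (n + 1) → ℕ :=
  fun u =>
    if u = 0 then c 0
    else c u + {w ∈ S | F.Adj w u}.ncard - if u ∈ S then F.deg u else 0

/-- A configuration is stable if every non-sink vertex has fewer grains than its degree. -/
def Stable {n : ℕ} (F : Ferrers n) (c : Fin (n + 1) → ℕ) : Prop :=
  ∀ v, v ≠ 0 → c v < F.deg v

/-- A Dhar (burning) ordering for `c`: an ordering `v₀ = 0, v₁, …, vₙ` of all the
vertices such that each `vᵢ` (`i ≥ 1`) is unstable after toppling `v₀, …, v_{i-1}`. -/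
def DharSeq {n : ℕ} (F : Ferrers n) (c : Fin (n + 1) → ℕ) (l : List (Fin (n + 1))) : Prop :=
  l.length = n + 1 ∧ l.Nodup ∧ l.head? = some 0 ∧
    ∀ i, ∀ h : i < l.length, 1 ≤ i →
      F.deg (l.get ⟨i, h⟩) ≤ F.toppleList c (l.take i) (l.get ⟨i, h⟩)

/-- Recurrent configurations (via Dhar's criterion).  The height at the sink is
normalised to `0`. -/
def Recurrent {n : ℕ} (F : Ferrers n) (c : Fin (n + 1) → ℕ) : Prop :=
  c 0 = 0 ∧ F.Stable c ∧ ∃ l, F.DharSeq c l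

/-- Minimal recurrent configurations: recurrent with minimal total number of grains. -/
def RecMin {n : ℕ} (F : Ferrers n) (c : Fin (n + 1) → ℕ) : Prop :=
  F.Recurrent c ∧ ∀ c', F.Recurrent c' → (∑ v, c v) ≤ ∑ v, c' v

/-- Canonical toppling: block `0` is `{0}` (the sink); from then on, blocks with odd
index are the sets of currently unstable column vertices and blocks with even index
the sets of currently unstable row vertices.  The first component is the configuration
just before toppling the block recorded in the second component. -/
noncomputable def canonAux {n : ℕ} (F : Ferrers n) (c : Fin (n + 1) → ℕ) :
    ℕ → ((Fin (n + 1) → ℕ) × Set (Fin (n + 1)))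
  | 0 => (c, {0})
  | k + 1 =>
    let c' := F.toppleSet (canonAux F c k).1 (canonAux F c k).2
    (c', {v | v ≠ 0 ∧ (if k % 2 = 0 then v ∉ F.rows else v ∈ F.rows) ∧ F.deg v ≤ c' v})

/-- The `k`-th block of the canonical toppling of `c`:
`canonTop F c 0 = U⁰ = {0}`, `canonTop F c (2i-1) = Vⁱ`, `canonTop F c (2i) = Uⁱ`. -/
noncomputable def canonTop {n : ℕ} (F : Ferrers n) (c : Fin (n + 1) → ℕ) (k : ℕ) :
    Set (Fin (n + 1)) :=
  (F.canonAux c k).2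

/-- The configuration just before toppling the `k`-th block of the canonical toppling. -/
noncomputable def canonConfig {n : ℕ} (F : Ferrers n) (c : Fin (n + 1) → ℕ) (k : ℕ) :
    Fin (n + 1) → ℕ :=
  (F.canonAux c k).1

/-- The index of the block of the canonical toppling of `c` containing `v`. -/
noncomputable def bIdx {n : ℕ} (F : Ferrers n) (c : Fin (n + 1) → ℕ) (v : Fin (n + 1)) : ℕ :=
  sInf {k | v ∈ F.canonTop c k}

/-- `T` is a EW-tableau on `F` (entries of non-cells are normalised to `false`):
the top row contains only `1`s, every other row contains a `0`, and there is no
rectangle with two diagonally opposite `0`s and two `1`s in the other corners. -/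
def IsEW {n : ℕ} (F : Ferrers n) (T : Fin (n + 1) → Fin (n + 1) → Bool) : Prop :=
  (∀ i j, ¬F.Cell i j → T i j = false) ∧
  (∀ j, F.Cell 0 j → T 0 j = true) ∧
  (∀ i, i ∈ F.rows → i ≠ 0 → ∃ j, F.Cell i j ∧ T i j = false) ∧
  (∀ i i' j j', F.Cell i j → F.Cell i j' → F.Cell i' j → F.Cell i' j' →
    T i j = T i' j' → T i j' = T i' j → T i j = T i j')

/-- The configuration associated to a tableau: row vertices count the `1`s in their
row, column vertices count the `0`s in their column (the sink is normalised to `0`). -/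
noncomputable def phiTC {n : ℕ} (F : Ferrers n) (T : Fin (n + 1) → Fin (n + 1) → Bool) :
    Fin (n + 1) → ℕ :=
  fun v =>
    if v = 0 then 0
    else if v ∈ F.rows then {j | F.Cell v j ∧ T v j = true}.ncard
    else {i | F.Cell i v ∧ T i v = false}.ncard

/-- The tableau associated to a (minimal recurrent) configuration: a cell `(i, j)`
gets a `1` exactly when `i` lies in an earlier block than `j` in the canonical
toppling of `c`. -/
noncomputable def phiCT {n : ℕ} (F : Ferrers n) (c : Fin (n + 1) → ℕ) :
    Fin (n + 1) → Fin (n + 1) → Bool :=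
  fun i j => if F.Cell i j ∧ F.bIdx c i < F.bIdx c j then true else false

/-- The supplementary tableau of `T`: `S i j = 1` exactly when the row vertex `i`
lies in an earlier block than the column vertex `j` in `CanonTop (φ_TC T)`. -/
noncomputable def suppS {n : ℕ} (F : Ferrers n) (T : Fin (n + 1) → Fin (n + 1) → Bool)
    (i j : Fin (n + 1)) : Bool :=
  if F.bIdx (F.phiTC T) i < F.bIdx (F.phiTC T) j then true else false

/-- The entry of `T` in cell `(j, k)` is a cornersupport entry. -/
def Cornersupport {n : ℕ} (F : Ferrers n) (T : Fin (n + 1) → Fin (n + 1) → Bool)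
    (j k : Fin (n + 1)) : Prop :=
  ∃ j' k', j' ∈ F.rows ∧ k' ∉ F.rows ∧ j' ≠ j ∧ k' ≠ k ∧
    F.suppS T j' k' = !(T j k) ∧ F.suppS T j' k = T j k ∧ F.suppS T j k' = T j k

/-- `ν_v(T)`: the number of non-cornersupport `0`s in row `v` (if `v` is a row label),
resp. non-cornersupport `1`s in column `v` (if `v` is a column label). -/
noncomputable def nu {n : ℕ} (F : Ferrers n) (T : Fin (n + 1) → Fin (n + 1) → Bool)
    (v : Fin (n + 1)) : ℕ :=
  if v ∈ F.rows then {k | F.Cell v k ∧ T v k = false ∧ ¬F.Cornersupport T v k}.ncard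
  else {i | F.Cell i v ∧ T i v = true ∧ ¬F.Cornersupport T i v}.ncard

/-- `μ_v(c)`: if `v ∈ Uⁱ`, the number of `k ∈ Vⁱ` with `k > v`; if `v ∈ Vⁱ`,
the number of `k ∈ U^{i-1}` with `k < v`.  In both cases the relevant block is the
one immediately preceding the block of `v`. -/
noncomputable def mu {n : ℕ} (F : Ferrers n) (c : Fin (n + 1) → ℕ) (v : Fin (n + 1)) : ℕ :=
  if v ∈ F.rows then {k | v < k ∧ k ∈ F.canonTop c (F.bIdx c v - 1)}.ncard
  else {k | k < v ∧ k ∈ F.canonTop c (F.bIdx c v - 1)}.ncard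

/-- The minimal recurrent configuration with the same canonical toppling as `c`:
if `j ∈ Uⁱ` then `minrec c j = |{ℓ ∈ Vᵏ : j < ℓ, k > i}|`, and if `j ∈ Vⁱ` then
`minrec c j = |{ℓ ∈ Uᵏ : ℓ < j, k ≥ i}|` (blocks `Vᵏ` sit at odd index `2k - 1`,
blocks `Uᵏ` at even index `2k`). -/
noncomputable def minrecFun {n : ℕ} (F : Ferrers n) (c : Fin (n + 1) → ℕ) :
    Fin (n + 1) → ℕ :=
  fun j =>
    if j = 0 then 0
    else if j ∈ F.rows then
      {l | j < l ∧ ∃ k, F.bIdx c j < 2 * k + 1 ∧ l ∈ F.canonTop c (2 * k + 1)}.ncard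
    else
      {l | l < j ∧ ∃ k, F.bIdx c j < 2 * k ∧ l ∈ F.canonTop c (2 * k)}.ncard

/-- The number of edges of `G(F)` (equivalently, the number of cells of `F`). -/
noncomputable def edgeCount {n : ℕ} (F : Ferrers n) : ℕ :=
  {p : Fin (n + 1) × Fin (n + 1) | F.Cell p.1 p.2}.ncard

end Ferrers

/-!
For a recurrent configuration `c` the canonical toppling reaches every vertex exactly once, so
every non-sink vertex `v` satisfies `deg v ≤ c v + #{neighbours of v in earlier blocks}`.
Conversely, a stable configuration satisfying such an inequality for some ranking of the vertices
that starts at the sink is recurrent. For a fixed ranking these inequalities, as well as stability,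
pass from `c` and `c'` to the pointwise minimum `c ⊓ c'`. Hence if two minimal recurrent
configurations have the same canonical toppling, their pointwise minimum is recurrent, and
minimality of the total height forces both of them to coincide with it.
-/

namespace Ferrers

variable {n : ℕ} {F : Ferrers n} {c c' : Fin (n + 1) → ℕ} {l : List (Fin (n + 1))}
  {S T : Set (Fin (n + 1))} {u v : Fin (n + 1)} {k : ℕ}

theorem Adj.symm (h : F.Adj u v) : F.Adj v u :=
  Or.symm h

/-- The number of neighbours of `u` in the set `S`: the number of grains that `u` receives when
all the vertices of `S` topple once. -/
noncomputable def degIn (F : Ferrers n) (S : Set (Fin (n + 1))) (u : Fin (n + 1)) : ℕ :=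
  {w ∈ S | F.Adj w u}.ncard

theorem degIn_empty : F.degIn ∅ u = 0 := by
  simp [degIn]

theorem degIn_singleton : F.degIn {v} u = if F.Adj v u then 1 else 0 := by
  split_ifs with h
  · exact Set.ncard_eq_one.2 ⟨v, Set.sep_eq_self_iff_mem_true.2 fun _ hw => hw ▸ h⟩
  · exact (Set.ncard_eq_zero).2 (Set.sep_eq_empty_iff_mem_false.2 fun _ hw => hw ▸ h)

theorem degIn_union (h : Disjoint S T) : F.degIn (S ∪ T) u = F.degIn S u + F.degIn T u := by
  have hsep : {w ∈ S ∪ T | F.Adj w u} = {w ∈ S | F.Adj w u} ∪ {w ∈ T | F.Adj w u} :=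
    Set.sep_union
  rw [degIn, hsep]
  exact Set.ncard_union_eq (h.mono (Set.sep_subset _ _) (Set.sep_subset _ _))

theorem degIn_mono (h : S ⊆ T) : F.degIn S u ≤ F.degIn T u :=
  Set.ncard_le_ncard fun _ hw => ⟨h hw.1, hw.2⟩

theorem degIn_le_deg : F.degIn S u ≤ F.deg u :=
  Set.ncard_le_ncard fun _ hw => hw.2.symm

theorem topple_apply_of_ne (hu : u ≠ 0) (huv : u ≠ v) : F.topple c v u = c u + F.degIn {v} u := by
  rw [topple, if_neg hu, if_neg huv, degIn_singleton]
  split_ifs <;> rfl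

theorem toppleList_apply_of_notMem (hu : u ≠ 0) (hl : l.Nodup) (hul : u ∉ l) :
    F.toppleList c l u = c u + F.degIn {w | w ∈ l} u := by
  induction l generalizing c with
  | nil => simp [toppleList, degIn_empty]
  | cons a l ih =>
    obtain ⟨hal, hl⟩ := List.nodup_cons.1 hl
    obtain ⟨hua, hul⟩ := not_or.1 (mt List.mem_cons.2 hul)
    have hset : {w | w ∈ a :: l} = {a} ∪ {w | w ∈ l} := Set.ext fun _ => List.mem_cons
    calc F.toppleList (F.topple c a) l u
        = c u + F.degIn {a} u + F.degIn {w | w ∈ l} u := by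
          rw [ih hl hul, topple_apply_of_ne hu hua]
      _ = c u + F.degIn {w | w ∈ a :: l} u := by
          rw [hset, degIn_union (Set.disjoint_singleton_left.2 hal), add_assoc]

theorem toppleList_take_apply_getElem (hl : l.Nodup) {i : ℕ} (hi : i < l.length) (h0 : l[i] ≠ 0) :
    F.toppleList c (l.take i) l[i] = c l[i] + F.degIn {w | w ∈ l.take i} l[i] := by
  refine toppleList_apply_of_notMem h0 (hl.sublist (List.take_sublist i l)) fun hmem => ?_
  obtain ⟨j, hj, hji⟩ := List.mem_take_iff_getElem.1 hmem
  have hij : j = i := hl.getElem_inj_iff.1 hji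
  omega

/-- `b` ranks the vertices in such a way that the sink is the only vertex of lowest rank and, starting
from `c`, every other vertex is unstable once all the vertices of smaller rank have toppled. Ties
are allowed, so that the block indices of a canonical toppling are a burning ranking. -/
structure IsBurningRank {α : Type*} [LT α] (F : Ferrers n) (c : Fin (n + 1) → ℕ)
    (b : Fin (n + 1) → α) : Prop where
  zero_lt : ∀ v, v ≠ 0 → b 0 < b v
  deg_le : ∀ v, v ≠ 0 → F.deg v ≤ c v + F.degIn {u | b u < b v} v

theorem IsBurningRank.inf {α : Type*} [LT α] {b : Fin (n + 1) → α} (h : F.IsBurningRank c b)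
    (h' : F.IsBurningRank c' b) : F.IsBurningRank (c ⊓ c') b where
  zero_lt := h.zero_lt
  deg_le v hv := by
    rw [Pi.inf_apply, min_add]
    exact le_min (h.deg_le v hv) (h'.deg_le v hv)

theorem IsBurningRank.dharSeq_ofFn_sort {α : Type*} [LinearOrder α] {b : Fin (n + 1) → α}
    (h : F.IsBurningRank c b) : F.DharSeq c (List.ofFn (Tuple.sort b)) := by
  set σ := Tuple.sort b
  have hmono : Monotone (b ∘ σ) := Tuple.monotone_sort b
  have hσ0 : σ 0 = 0 := by
    by_contra hne
    have hle : b (σ 0) ≤ b (σ (σ.symm 0)) := hmono (Fin.zero_le _)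
    rw [Equiv.apply_symm_apply] at hle
    exact (h.zero_lt _ hne).not_ge hle
  have hnodup : (List.ofFn σ).Nodup := List.nodup_ofFn.2 σ.injective
  refine ⟨List.length_ofFn, hnodup, by simp [List.ofFn_succ, hσ0], fun i hi hi1 => ?_⟩
  have hget : (List.ofFn σ)[i] = σ ⟨i, by simpa using hi⟩ := List.getElem_ofFn hi
  have hne : (List.ofFn σ)[i] ≠ 0 := by
    rw [hget]
    intro hzero
    have hi0 := congrArg Fin.val (σ.injective (hzero.trans hσ0.symm))
    exact Nat.one_le_iff_ne_zero.1 hi1 hi0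
  rw [List.get_eq_getElem, toppleList_take_apply_getElem hnodup hi hne]
  refine (h.deg_le _ hne).trans (Nat.add_le_add_left (degIn_mono fun u hu => ?_) _)
  rw [Set.mem_ofPred_eq, hget, ← σ.apply_symm_apply u] at hu
  have hlt : (σ.symm u : ℕ) < i := hmono.reflect_lt hu
  refine List.mem_take_iff_getElem.2 ⟨σ.symm u, lt_min hlt (hlt.trans hi), ?_⟩
  rw [List.getElem_ofFn, Fin.eta, Equiv.apply_symm_apply]

theorem Stable.of_le (hc : F.Stable c) (h : c' ≤ c) : F.Stable c' :=
  fun v hv => (h v).trans_lt (hc v hv)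

theorem Recurrent.of_le_of_isBurningRank {α : Type*} [LinearOrder α] {b : Fin (n + 1) → α}
    (hc : F.Recurrent c) (hle : c' ≤ c) (h : F.IsBurningRank c' b) : F.Recurrent c' :=
  ⟨Nat.le_zero.1 (hc.1 ▸ hle 0), hc.2.1.of_le hle, _, h.dharSeq_ofFn_sort⟩

theorem RecMin.eq_of_le (hc : F.RecMin c) (hc' : F.Recurrent c') (h : c' ≤ c) : c' = c := by
  have hsum : ∑ v, c' v = ∑ v, c v :=
    (Finset.sum_le_sum fun v _ => h v).antisymm (hc.2 c' hc')
  exact funext fun v => (Finset.sum_eq_sum_iff_of_le fun v _ => h v).1 hsum v (Finset.mem_univ v)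

theorem RecMin.eq_of_isBurningRank {α : Type*} [LinearOrder α] {b : Fin (n + 1) → α}
    (hc : F.RecMin c) (hc' : F.RecMin c') (h : F.IsBurningRank c b) (h' : F.IsBurningRank c' b) :
    c = c' := by
  have hinf : F.Recurrent (c ⊓ c') := hc.1.of_le_of_isBurningRank inf_le_left (h.inf h')
  exact (hc.eq_of_le hinf inf_le_left).symm.trans (hc'.eq_of_le hinf inf_le_right)

theorem DharSeq.mem (hl : F.DharSeq c l) (v : Fin (n + 1)) : v ∈ l := by
  have huniv : l.toFinset = Finset.univ := by
    rw [← Finset.card_eq_iff_eq_univ, List.toFinset_card_of_nodup hl.2.1, hl.1, Fintype.card_fin]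
  exact List.mem_toFinset.1 (huniv ▸ Finset.mem_univ v)

theorem DharSeq.eq_univ_of_closed (hl : F.DharSeq c l) (h0 : 0 ∈ S)
    (hS : ∀ v, v ≠ 0 → F.deg v ≤ c v + F.degIn S v → v ∈ S) : S = Set.univ := by
  have hget : ∀ i (hi : i < l.length), l[i] ∈ S := by
    intro i
    induction i using Nat.strong_induction_on with
    | _ i ih =>
      intro hi
      by_cases hne : l[i] = 0
      · exact hne ▸ h0
      have hpos : 1 ≤ i := by
        refine Nat.one_le_iff_ne_zero.2 ?_
        rintro rfl
        exact hne (List.getElem_eq_iff hi |>.2 (List.head?_eq_getElem? ▸ hl.2.2.1))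
      have htake : {w | w ∈ l.take i} ⊆ S := by
        intro w hw
        obtain ⟨j, hj, rfl⟩ := List.mem_take_iff_getElem.1 hw
        exact ih j (lt_min_iff.1 hj).1 _
      have hdeg := hl.2.2.2 i hi hpos
      rw [List.get_eq_getElem, toppleList_take_apply_getElem hl.2.1 hi hne] at hdeg
      exact hS _ hne (hdeg.trans (Nat.add_le_add_left (degIn_mono htake) _))
  refine Set.eq_univ_of_forall fun v => ?_
  obtain ⟨i, hi, rfl⟩ := List.mem_iff_getElem.1 (hl.mem v)
  exact hget i hi

theorem mem_canonTop_succ : v ∈ F.canonTop c (k + 1) ↔ v ≠ 0 ∧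
    (if k % 2 = 0 then v ∉ F.rows else v ∈ F.rows) ∧ F.deg v ≤ F.canonConfig c (k + 1) v :=
  Iff.rfl

theorem deg_le_canonConfig_of_mem_canonTop (hv : v ≠ 0) (h : v ∈ F.canonTop c k) :
    F.deg v ≤ F.canonConfig c k v := by
  cases k with
  | zero => exact absurd h hv
  | succ k => exact h.2.2

theorem canonConfig_succ_add (hu : u ≠ 0) :
    F.canonConfig c (k + 1) u + (if u ∈ F.canonTop c k then F.deg u else 0) =
      F.canonConfig c k u + F.degIn (F.canonTop c k) u := by
  have hsucc : F.canonConfig c (k + 1) u = F.canonConfig c k u + F.degIn (F.canonTop c k) u -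
      if u ∈ F.canonTop c k then F.deg u else 0 := if_neg hu
  rw [hsucc, Nat.sub_add_cancel]
  split_ifs with hmem
  · exact (deg_le_canonConfig_of_mem_canonTop hu hmem).trans (Nat.le_add_right _ _)
  · exact Nat.zero_le _

/-- The vertices toppled before the `k`-th block of the canonical toppling. -/
def toppledBefore (F : Ferrers n) (c : Fin (n + 1) → ℕ) (k : ℕ) : Set (Fin (n + 1)) :=
  ⋃ j < k, F.canonTop c j

theorem mem_toppledBefore : v ∈ F.toppledBefore c k ↔ ∃ j < k, v ∈ F.canonTop c j := by
  simp only [toppledBefore, Set.mem_iUnion, exists_prop]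

theorem toppledBefore_zero : F.toppledBefore c 0 = ∅ := by
  simp [toppledBefore]

theorem toppledBefore_succ :
    F.toppledBefore c (k + 1) = F.toppledBefore c k ∪ F.canonTop c k :=
  Set.biUnion_lt_succ _ k

theorem toppledBefore_mono : Monotone (F.toppledBefore c) :=
  fun _ _ hkm => Set.biUnion_subset_biUnion_left fun _ hj => lt_of_lt_of_le hj hkm

theorem canonConfig_add_of_disjoint
    (hdisj : ∀ j < k, Disjoint (F.toppledBefore c j) (F.canonTop c j)) (hu : u ≠ 0) :
    F.canonConfig c k u + (if u ∈ F.toppledBefore c k then F.deg u else 0) =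
      c u + F.degIn (F.toppledBefore c k) u := by
  induction k with
  | zero => simp [toppledBefore_zero, degIn_empty, canonConfig, canonAux]
  | succ k ih =>
    have hbefore := ih fun j hj => hdisj j (hj.trans k.lt_succ_self)
    have hblock := canonConfig_succ_add (F := F) (c := c) (k := k) hu
    have hk := hdisj k k.lt_succ_self
    have hindicator : (if u ∈ F.toppledBefore c (k + 1) then F.deg u else 0) =
        (if u ∈ F.toppledBefore c k then F.deg u else 0) +
          if u ∈ F.canonTop c k then F.deg u else 0 := by
      rw [toppledBefore_succ, Set.mem_union]
      by_cases hbef : u ∈ F.toppledBefore c k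
      · simp [hbef, Set.disjoint_left.1 hk hbef]
      · simp [hbef]
    rw [hindicator, toppledBefore_succ, degIn_union hk]
    omega

/-- A vertex toppled twice would need at least twice its degree in grains, but receives at most
`deg u` on top of `c u < deg u`. -/
theorem Stable.disjoint_toppledBefore_canonTop (hc : F.Stable c) (k : ℕ) :
    Disjoint (F.toppledBefore c k) (F.canonTop c k) := by
  induction k using Nat.strong_induction_on with
  | _ k ih =>
    refine Set.disjoint_left.2 fun u hbef hmem => ?_
    cases k with
    | zero => simp [toppledBefore_zero] at hbef
    | succ k =>
      have hu : u ≠ 0 := hmem.1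
      have hbalance := canonConfig_add_of_disjoint ih hu
      rw [if_pos hbef] at hbalance
      have hdeg := deg_le_canonConfig_of_mem_canonTop hu hmem
      have hin := degIn_le_deg (F := F) (S := F.toppledBefore c (k + 1)) (u := u)
      have hstable := hc u hu
      omega

theorem Stable.canonConfig_apply_of_notMem (hc : F.Stable c) (hu : u ≠ 0)
    (huk : u ∉ F.toppledBefore c k) :
    F.canonConfig c k u = c u + F.degIn (F.toppledBefore c k) u := by
  simpa [huk] using
    canonConfig_add_of_disjoint (k := k) (fun j _ => hc.disjoint_toppledBefore_canonTop j) hu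

theorem exists_iUnion_canonTop_subset_toppledBefore (F : Ferrers n) (c : Fin (n + 1) → ℕ) :
    ∃ K, ⋃ k, F.canonTop c k ⊆ F.toppledBefore c K := by
  obtain ⟨K, hK⟩ := WellFoundedGT.monotone_chain_condition
    (⟨F.toppledBefore c, toppledBefore_mono⟩ : ℕ →o Set (Fin (n + 1)))
  refine ⟨K, Set.iUnion_subset fun k v hv => ?_⟩
  have hv' : v ∈ F.toppledBefore c (max K (k + 1)) :=
    mem_toppledBefore.2 ⟨k, by omega, hv⟩
  exact (hK _ (le_max_left _ _)).ge hv'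

theorem exists_ge_ite_mem_rows (F : Ferrers n) (v : Fin (n + 1)) (K : ℕ) :
    ∃ k ≥ K, if k % 2 = 0 then v ∉ F.rows else v ∈ F.rows := by
  by_cases hv : v ∈ F.rows
  · exact ⟨2 * K + 1, by omega, by simp [hv, Nat.add_mod]⟩
  · exact ⟨2 * K, by omega, by simp [hv]⟩

theorem Stable.mem_iUnion_canonTop_of_deg_le (hc : F.Stable c) (hv : v ≠ 0)
    (hdeg : F.deg v ≤ c v + F.degIn (⋃ k, F.canonTop c k) v) : v ∈ ⋃ k, F.canonTop c k := by
  obtain ⟨K, hK⟩ := exists_iUnion_canonTop_subset_toppledBefore F c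
  obtain ⟨k, hKk, hturn⟩ := F.exists_ge_ite_mem_rows v K
  by_cases hbef : v ∈ F.toppledBefore c (k + 1)
  · obtain ⟨j, -, hj⟩ := mem_toppledBefore.1 hbef
    exact Set.mem_iUnion_of_mem j hj
  · refine Set.mem_iUnion_of_mem (k + 1) (mem_canonTop_succ.2 ⟨hv, hturn, ?_⟩)
    rw [hc.canonConfig_apply_of_notMem hv hbef]
    have hsub := hK.trans (toppledBefore_mono (hKk.trans k.le_succ))
    exact hdeg.trans (Nat.add_le_add_left (degIn_mono hsub) _)

theorem Recurrent.iUnion_canonTop_eq_univ (hc : F.Recurrent c) :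
    ⋃ k, F.canonTop c k = Set.univ := by
  obtain ⟨-, hstable, l, hl⟩ := hc
  exact hl.eq_univ_of_closed (Set.mem_iUnion_of_mem 0 rfl)
    fun _ hv => hstable.mem_iUnion_canonTop_of_deg_le hv

theorem Recurrent.mem_canonTop_bIdx (hc : F.Recurrent c) (v : Fin (n + 1)) :
    v ∈ F.canonTop c (F.bIdx c v) :=
  Nat.sInf_mem (Set.mem_iUnion.1 (hc.iUnion_canonTop_eq_univ ▸ Set.mem_univ v))

theorem bIdx_lt_of_mem_toppledBefore (h : v ∈ F.toppledBefore c k) : F.bIdx c v < k := by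
  obtain ⟨j, hj, hmem⟩ := mem_toppledBefore.1 h
  exact (Nat.sInf_le hmem).trans_lt hj

theorem bIdx_zero : F.bIdx c 0 = 0 :=
  Nat.sInf_eq_zero.2 (Or.inl rfl)

theorem Recurrent.isBurningRank_bIdx (hc : F.Recurrent c) : F.IsBurningRank c (F.bIdx c) where
  zero_lt v hv := by
    rw [bIdx_zero, Nat.pos_iff_ne_zero]
    intro hidx
    exact hv (hidx ▸ hc.mem_canonTop_bIdx v : v ∈ F.canonTop c 0)
  deg_le v hv := by
    have hnot : v ∉ F.toppledBefore c (F.bIdx c v) :=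
      fun h => (bIdx_lt_of_mem_toppledBefore h).false
    calc F.deg v ≤ F.canonConfig c (F.bIdx c v) v :=
          deg_le_canonConfig_of_mem_canonTop hv (hc.mem_canonTop_bIdx v)
      _ = c v + F.degIn (F.toppledBefore c (F.bIdx c v)) v :=
          hc.2.1.canonConfig_apply_of_notMem hv hnot
      _ ≤ c v + F.degIn {u | F.bIdx c u < F.bIdx c v} v :=
          Nat.add_le_add_left (degIn_mono fun _ => bIdx_lt_of_mem_toppledBefore) _

theorem bIdx_congr (h : ∀ k, F.canonTop c k = F.canonTop c' k) : F.bIdx c = F.bIdx c' := by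
  funext v
  simp only [bIdx, h]

end Ferrers

/-- Two minimal recurrent configurations on `G(F)` have the same
canonical toppling if and only if they are equal. -/
theorem canonTop_eq_iff_eq {n : ℕ} (F : Ferrers n) (c c' : Fin (n + 1) → ℕ)
    (hc : F.RecMin c) (hc' : F.RecMin c') :
    (∀ k, F.canonTop c k = F.canonTop c' k) ↔ c = c' := by
  refine ⟨fun h => ?_, fun h _ => h ▸ rfl⟩
  have hrank : F.IsBurningRank c (F.bIdx c) := hc.1.isBurningRank_bIdx
  have hrank' : F.IsBurningRank c' (F.bIdx c) :=
    Ferrers.bIdx_congr h ▸ hc'.1.isBurningRank_bIdx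
  exact hc.eq_of_isBurningRank hc' hrank hrank'
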